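/- Let K be a field and p_T = ⟨P_1,…,P_l⟩ a prime ideal of K[T,Y] with p_T ∩ K[T] = {0} and such that Frac(K[T,Y]/p_T) is a separable extension of K(T). Let p̃_T be the ideal generated by P_1,…,P_l in K(T)[Y] and let d be the Krull dimension of K(T)[Y]/p̃_T. Then there exists a Hilbert subset H of K^r such that for every t ∈ H, the specialized ideal p_t = ⟨P_1(t,Y),…,P_l(t,Y)⟩ of K[Y] is prime and K[Y]/p_t is an integral domain of Krull dimension d. -/

import Mathlib

open MvPolynomial

noncomputable section

/-- The rational function field `K(T)` with variables indexed by `ι`,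
realized as the fraction field of the polynomial ring. -/
abbrev RatFuncField (K : Type) [Field K] (ι : Type) : Type := FractionRing (MvPolynomial ι K)

/-- `x ∈ K(T)` can be specialized at `t ∈ K^ι` with value `v`:
there is a representation `x = a/b` with `b(t) ≠ 0` and `v = a(t)/b(t)`. -/
def RatSpecializesTo (K : Type) [Field K] {ι : Type} (t : ι → K)
    (x : RatFuncField K ι) (v : K) : Prop :=
  ∃ a b : MvPolynomial ι K, MvPolynomial.eval t b ≠ 0 ∧
    algebraMap (MvPolynomial ι K) (RatFuncField K ι) b * x
      = algebraMap (MvPolynomial ι K) (RatFuncField K ι) a ∧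
    MvPolynomial.eval t b * v = MvPolynomial.eval t a

/-- `P ∈ K(T)[Y]` specializes at `t` (coefficientwise) to `q ∈ K[Y]`. -/
def PolySpecializesTo (K : Type) [Field K] {ι : Type} {s : ℕ} (t : ι → K)
    (P : MvPolynomial (Fin s) (RatFuncField K ι)) (q : MvPolynomial (Fin s) K) : Prop :=
  ∀ mono : Fin s →₀ ℕ, RatSpecializesTo K t (P.coeff mono) (q.coeff mono)

/-- `H` is a Hilbert subset of `K^ι`: the set of points where finitely many irreducible
polynomials of `K(T)[Y]` specialize to irreducible polynomials of `K[Y]`, intersected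
with a nonempty Zariski-open subset. -/
def IsHilbertSubset (K : Type) [Field K] (ι : Type) (H : Set (ι → K)) : Prop :=
  ∃ (s l n : ℕ) (p : Fin l → MvPolynomial (Fin s) (RatFuncField K ι))
    (g : Fin n → MvPolynomial ι K),
    (∀ i, Irreducible (p i)) ∧
    (∃ t : ι → K, ∃ j, MvPolynomial.eval t (g j) ≠ 0) ∧
    H = {t | (∃ j, MvPolynomial.eval t (g j) ≠ 0) ∧
      ∀ i, ∃ q : MvPolynomial (Fin s) K, PolySpecializesTo K t (p i) q ∧ Irreducible q}

/-- A subset of `K^ι` is Zariski-dense iff for every nonzero polynomial `g` it contains a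
point where `g` does not vanish. -/
def IsZariskiDense (K : Type) [Field K] {ι : Type} (S : Set (ι → K)) : Prop :=
  ∀ g : MvPolynomial ι K, g ≠ 0 → ∃ t ∈ S, MvPolynomial.eval t g ≠ 0

/-- A field is Hilbertian if all its Hilbert subsets (of all `K^r`, `r ≥ 1`) are
Zariski-dense. -/
def IsHilbertianField (K : Type) [Field K] : Prop :=
  ∀ r : ℕ, 0 < r → ∀ H : Set (Fin r → K), IsHilbertSubset K (Fin r) H → IsZariskiDense K H

/-- The canonical ring homomorphism `K[T,Y] → K(T)[Y]`. -/
def extHom (K : Type) [Field K] (r s : ℕ) :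
    MvPolynomial (Fin r ⊕ Fin s) K →+* MvPolynomial (Fin s) (RatFuncField K (Fin r)) :=
  MvPolynomial.eval₂Hom
    ((MvPolynomial.C).comp
      ((algebraMap (MvPolynomial (Fin r) K) (RatFuncField K (Fin r))).comp MvPolynomial.C))
    (Sum.elim
      (fun i => MvPolynomial.C
        (algebraMap (MvPolynomial (Fin r) K) (RatFuncField K (Fin r)) (MvPolynomial.X i)))
      (fun j => MvPolynomial.X j))

/-- The specialization homomorphism `K[T,Y] → K[Y]`, `T ↦ t`. -/
def specHom (K : Type) [Field K] {r s : ℕ} (t : Fin r → K) :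
    MvPolynomial (Fin r ⊕ Fin s) K →+* MvPolynomial (Fin s) K :=
  MvPolynomial.eval₂Hom MvPolynomial.C
    (Sum.elim (fun i => MvPolynomial.C (t i)) (fun j => MvPolynomial.X j))

/-- `L` is a separable extension of `F` in the general sense (equivalently, `L` is
linearly disjoint from the perfect closure of `F`, equivalently `L ⊗_F F̄` is reduced);
the extension is given by the ring homomorphism `f : F → L`. -/
def IsSepExtOfHom (F L : Type) [Field F] [CommRing L] (f : F →+* L) : Prop :=
  letI : Algebra F L := f.toAlgebra
  IsReduced (TensorProduct F (AlgebraicClosure F) L)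

/-- `Frac(A)` is a separable extension of `F` in the general sense. -/
def IsSepOverBase (F : Type) [Field F] (A : Type) [CommRing A] [Algebra F A] : Prop :=
  IsSepExtOfHom F (FractionRing A) ((algebraMap A (FractionRing A)).comp (algebraMap F A))

/-- The height of an ideal: the infimum over primes containing it of the lengths of
chains of primes below.  For a prime ideal this is the usual height. -/
def idealHeight {R : Type} [CommRing R] (I : Ideal R) : ℕ∞ :=
  ⨅ p : {q : PrimeSpectrum R // I ≤ q.asIdeal}, Order.height p.1

/-- The monomials in `s` variables of total degree at most `D`. -/
def MonLE (s D : ℕ) : Type := {m : Fin s →₀ ℕ // m.degree ≤ D}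

noncomputable instance (s D : ℕ) : Fintype (MonLE s D) :=
  (Finsupp.finite_of_degree_le D).fintype

/-- The generic polynomial of degree `D`, with parameter variables `v m`, `m` a monomial of
degree at most `D`, as an element of `K[Λ][Y]`. -/
def genPoly (K : Type) [Field K] (s D : ℕ) {Λ : Type} (v : MonLE s D → Λ) :
    MvPolynomial (Fin s) (MvPolynomial Λ K) :=
  ∑ m : MonLE s D, MvPolynomial.monomial m.1 (MvPolynomial.X (v m))

/-- The generic polynomial of degree `D` specialized at `lam ∈ K^{N_D}`. -/
def genPolyAt (K : Type) [Field K] (s D : ℕ) (lam : MonLE s D → K) :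
    MvPolynomial (Fin s) K :=
  ∑ m : MonLE s D, MvPolynomial.monomial m.1 (lam m)

/-- Substitution `T_i ↦ U_i(Y)` as a ring homomorphism `K[T,Y] → K[Y]`. -/
def polySubstHom (K : Type) [Field K] {r s : ℕ} (U : Fin r → MvPolynomial (Fin s) K) :
    MvPolynomial (Fin r ⊕ Fin s) K →+* MvPolynomial (Fin s) K :=
  MvPolynomial.eval₂Hom MvPolynomial.C (Sum.elim U (fun j => MvPolynomial.X j))

/-- The quasi-generic polynomial `Q_{S,R}(Λ,Y) = ∑_i Λ_i Q_i(Y) + R(Y)` of base `(S,R)`,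
where `S = {monomial (m 0), …, monomial (m n)}`, as an element of `K[Λ][Y]`. -/
def quasiGen (K : Type) [Field K] {s n : ℕ} (m : Fin (n + 1) → (Fin s →₀ ℕ))
    (R : MvPolynomial (Fin s) K) :
    MvPolynomial (Fin s) (MvPolynomial (Fin (n + 1)) K) :=
  (∑ i, MvPolynomial.monomial (m i) (MvPolynomial.X i)) +
    MvPolynomial.map (MvPolynomial.C) R

/-- Hypothesis (H) for the triple `(p, S, R)` (with `S` the set of monomials
`monomial (m i)`, `m 0 = 0`): the map `φ_{S,R}` sending `(a_1,…,a_n)` to the class mod `E`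
of `∑_{i ≥ 1} a_i Q_i(Y) + R(Y)` in `B/E` is not identically zero, where `B = K[Y]/p` and
`E ⊆ B` is the subfield of elements algebraic over `K`. -/
def HypothesisH (K : Type) [Field K] {s n : ℕ} (p : Ideal (MvPolynomial (Fin s) K))
    (m : Fin (n + 1) → (Fin s →₀ ℕ)) (R : MvPolynomial (Fin s) K) : Prop :=
  ∃ a : Fin (n + 1) → K,
    Ideal.Quotient.mk p ((∑ i ∈ Finset.univ.erase 0, MvPolynomial.monomial (m i) (a i)) + R)
      ∉ integralClosure K (MvPolynomial (Fin s) K ⧸ p)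


theorem aux_dim_integral (S A : Type) [CommRing S] [CommRing A] [Algebra S A]
    [Algebra.IsIntegral S A] (hinj : Function.Injective (algebraMap S A)) :
    ringKrullDim A = ringKrullDim S := by
  apply le_antisymm
  · apply Order.krullDim_le_of_strictMono (PrimeSpectrum.comap (algebraMap S A))
    intro p q hpq
    have := p.2
    exact Ideal.IsIntegral.comap_lt_comap (R := S) (I := p.asIdeal) (J := q.asIdeal) hpq
  · apply iSup_le
    intro l
    have hl := (RelSeries.head l).2
    obtain ⟨P, -, hP1, hP2⟩ := Ideal.exists_ideal_over_prime_of_isIntegral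
      (R := S) (S := A) (RelSeries.head l).asIdeal ⊥ (by
        intro x hx
        have : x = 0 := hinj (by simpa using hx)
        simp [this])
    have : P.LiesOver (RelSeries.head l).asIdeal := ⟨hP2.symm⟩
    obtain ⟨L, h1, -⟩ := Ideal.exists_ltSeries_of_hasGoingUp (S := A) l P
    rw [← h1]
    exact Order.LTSeries.length_le_krullDim L

theorem aux_dim_trdeg (k A : Type) [Field k] [CommRing A] [IsDomain A] [Algebra k A]
    [Algebra.FiniteType k A] (n : ℕ) (h : Algebra.trdeg k A = n) : ringKrullDim A = n := by
  obtain ⟨m, g, hg, hint⟩ := exists_integral_inj_algHom_of_fg k A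
  have h1 : ringKrullDim A = m := by
    let _ := g.toRingHom.toAlgebra
    have : Algebra.IsIntegral (MvPolynomial (Fin m) k) A := ⟨hint⟩
    rw [aux_dim_integral (MvPolynomial (Fin m) k) A hg, MvPolynomial.ringKrullDim_of_isNoetherianRing]
    simp [ringKrullDim_eq_zero_of_field]
  have h2 : Algebra.trdeg k A = m := by
    let _ := g.toRingHom.toAlgebra
    have : IsScalarTower k (MvPolynomial (Fin m) k) A := IsScalarTower.of_algebraMap_eq' (by
      ext x; exact (g.commutes x).symm)
    have : Algebra.IsIntegral (MvPolynomial (Fin m) k) A := ⟨hint⟩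
    have : FaithfulSMul (MvPolynomial (Fin m) k) A := (faithfulSMul_iff_algebraMap_injective _ _).2 hg
    rw [← trdeg_add_eq (R := k) (S := MvPolynomial (Fin m) k) (A := A),
      trdeg_eq_zero (R := MvPolynomial (Fin m) k) (A := A), MvPolynomial.trdeg_of_isDomain]
    simp
  rw [h1]
  rw [h] at h2
  have : n = m := by exact_mod_cast h2
  simp [this]

theorem aux_finite_minimal {s : ℕ} (Λ : Set (Fin s →₀ ℕ)) :
    ∃ M : Finset (Fin s →₀ ℕ), (M : Set _) ⊆ Λ ∧ ∀ x ∈ Λ, ∃ y ∈ M, y ≤ x := by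
  have hfin : {x | Minimal (· ∈ Λ) x}.Finite :=
    WellQuasiOrderedLE.finite_of_isAntichain (setOfPred_minimal_antichain _)
  refine ⟨hfin.toFinset, ?_, ?_⟩
  · intro x hx
    simp only [Set.Finite.coe_toFinset] at hx
    exact hx.1
  · intro x hx
    obtain ⟨y, hy1, hy2⟩ := exists_minimal_le_of_wellFoundedLT (· ∈ Λ) x hx
    exact ⟨y, by simpa using hy2, hy1⟩

theorem aux_generic_groebner {R : Type} [CommRing R] [IsDomain R] {s : ℕ}
    (J : Ideal (MvPolynomial (Fin s) R)) :
    ∃ g : R, g ≠ 0 ∧ ∀ (m : Ideal R) (Q : Ideal (MvPolynomial (Fin s) R)),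
      (∀ c ∈ m, ∀ j ∈ J, C c * j ∈ Q) →
      ∀ e ∈ J, (∀ n, coeff n e ∈ m) → ∃ N : ℕ, C g ^ N * e ∈ Q := by
  classical
  let o : MonomialOrder (Fin s) := MonomialOrder.lex
  obtain ⟨M, hM1, hM2⟩ := aux_finite_minimal {x | ∃ e ∈ J, e ≠ 0 ∧ o.degree e = x}
  have hM1' : ∀ x ∈ M, ∃ e ∈ J, e ≠ 0 ∧ o.degree e = x := fun x hx => hM1 hx
  choose! b hb1 hb2 hb3 using hM1'
  refine ⟨∏ x ∈ M, o.leadingCoeff (b x), ?_, ?_⟩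
  · rw [Finset.prod_ne_zero_iff]
    intro x hx
    exact (o.leadingCoeff_ne_zero_iff).2 (hb2 x hx)
  intro m Q hQ
  have key : ∀ (δ : o.syn) (e : MvPolynomial (Fin s) R), o.toSyn (o.degree e) = δ → e ∈ J →
      (∀ n, coeff n e ∈ m) → ∃ N : ℕ, C (∏ x ∈ M, o.leadingCoeff (b x)) ^ N * e ∈ Q := by
    intro δ
    induction δ using WellFoundedLT.induction with
    | ind δ ih =>
    intro e he heJ hem
    by_cases he0 : e = 0
    · exact ⟨0, by simp [he0]⟩
    obtain ⟨x, hx, hxe⟩ := hM2 (o.degree e) ⟨e, heJ, he0, rfl⟩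
    set c := o.leadingCoeff (b x) with hc
    have hc0 : c ≠ 0 := (o.leadingCoeff_ne_zero_iff).2 (hb2 x hx)
    obtain ⟨c', hc'⟩ : c ∣ ∏ x ∈ M, o.leadingCoeff (b x) := Finset.dvd_prod_of_mem _ hx
    set q := C (o.leadingCoeff e) * (monomial (o.degree e - x) 1 * b x) with hq
    have hlm : o.leadingCoeff e ∈ m := hem _
    have hbJ : monomial (o.degree e - x) 1 * b x ∈ J := J.mul_mem_left _ (hb1 x hx)
    have hqQ : q ∈ Q := hQ _ hlm _ hbJ
    set e' := C c * e - q with he'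
    have hmon : (monomial (o.degree e - x) (1:R)) ≠ 0 := by simp
    have hdegq : o.degree (monomial (o.degree e - x) 1 * b x) = o.degree e := by
      rw [o.degree_mul hmon (hb2 x hx), hb3 x hx, o.degree_monomial]
      simp [tsub_add_cancel_of_le hxe]
    have hlcq : o.leadingCoeff (monomial (o.degree e - x) 1 * b x) = c := by
      rw [o.leadingCoeff_mul]; simp [hc]
    have hcoef : coeff (o.degree e) e' = 0 := by
      have h1 : coeff (o.degree e) (monomial (o.degree e - x) 1 * b x) = c := by
        rw [← hlcq, MonomialOrder.leadingCoeff, hdegq]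
      rw [he', hq, coeff_sub, coeff_C_mul, coeff_C_mul, h1]
      simp only [MonomialOrder.leadingCoeff]; ring
    have hle : o.toSyn (o.degree e') ≤ o.toSyn (o.degree e) := by
      rw [he', sub_eq_add_neg]
      rw [o.degree_le_iff]
      intro n hn
      by_contra hlt
      rw [not_le] at hlt
      rw [mem_support_iff] at hn
      apply hn
      rw [coeff_add, coeff_neg, hq, coeff_C_mul, coeff_C_mul, o.coeff_eq_zero_of_lt hlt,
        o.coeff_eq_zero_of_lt (by rw [hdegq]; exact hlt)]
      simp
    have he'J : e' ∈ J := J.sub_mem (J.mul_mem_left _ heJ) (J.mul_mem_left _ hbJ)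
    have he'm : ∀ n, coeff n e' ∈ m := by
      intro n
      rw [he', hq, coeff_sub, coeff_C_mul, coeff_C_mul]
      exact m.sub_mem (m.mul_mem_left _ (hem n)) (m.mul_mem_right _ hlm)
    have hfin : ∃ N : ℕ, C (∏ x ∈ M, o.leadingCoeff (b x)) ^ N * e' ∈ Q := by
      by_cases h0 : e' = 0
      · exact ⟨0, by simp [h0]⟩
      · refine ih _ ?_ e' rfl he'J he'm
        rw [← he]
        refine lt_of_le_of_ne hle ?_
        intro heq
        have := o.toSyn.injective heq
        rw [← this] at hcoef
        exact h0 (o.coeff_degree_eq_zero_iff.1 hcoef)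
    obtain ⟨N, hN⟩ := hfin
    refine ⟨N + 1, ?_⟩
    have : C (∏ x ∈ M, o.leadingCoeff (b x)) ^ (N+1) * e =
        C c' * (C (∏ x ∈ M, o.leadingCoeff (b x)) ^ N * e') +
        C (∏ x ∈ M, o.leadingCoeff (b x)) ^ N * C c' * q := by
      rw [pow_succ]
      conv_lhs => rw [mul_assoc]; arg 2; rw [hc']
      rw [C_mul, he']; ring
    rw [this]
    exact Q.add_mem (Q.mul_mem_left _ hN) (Q.mul_mem_left _ hqQ)
  intro e he hem
  exact key _ e rfl he hem

theorem aux_generic_nzd {R : Type} [CommRing R] [IsDomain R] {s : ℕ}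
    (I : Ideal (MvPolynomial (Fin s) R)) [I.IsPrime] (w : MvPolynomial (Fin s) R) (hw : w ∉ I) :
    ∃ g : R, g ≠ 0 ∧ ∀ (K : Type) [Field K] (ev : R →+* K), Function.Surjective ev → ev g ≠ 0 →
      ∀ h : MvPolynomial (Fin s) K, map ev w * h ∈ I.map (map ev) → h ∈ I.map (map ev) := by
  obtain ⟨g, hg0, hg⟩ := aux_generic_groebner (I ⊔ Ideal.span {w})
  refine ⟨g, hg0, ?_⟩
  intro K _ ev hev hevg h hh
  have hsurj : Function.Surjective (map ev : MvPolynomial (Fin s) R →+* MvPolynomial (Fin s) K) :=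
    map_surjective ev hev
  rw [Ideal.mem_map_iff_of_surjective _ hsurj] at hh
  obtain ⟨i, hi, hiw⟩ := hh
  obtain ⟨h', rfl⟩ := hsurj h
  let Q : Ideal (MvPolynomial (Fin s) R) := I ⊔ Ideal.span {w} * (RingHom.ker (map ev : MvPolynomial (Fin s) R →+* MvPolynomial (Fin s) K))
  have q1 : ∀ c ∈ RingHom.ker ev, ∀ j ∈ I ⊔ Ideal.span {w}, C c * j ∈ Q := by
    intro c hc j hj
    obtain ⟨a, ha, b, hb, rfl⟩ := Submodule.mem_sup.1 hj
    obtain ⟨d, rfl⟩ := Ideal.mem_span_singleton'.1 hb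
    rw [mul_add]
    refine Q.add_mem (Ideal.mem_sup_left (I.mul_mem_left _ ha)) (Ideal.mem_sup_right ?_)
    rw [show C c * (d * w) = w * (C c * d) by ring]
    refine Ideal.mul_mem_mul (Ideal.mem_span_singleton_self w) ?_
    rw [RingHom.mem_ker] at hc ⊢
    rw [map_mul, map_C, hc]; simp
  have q2 : w * h' - i ∈ I ⊔ Ideal.span {w} :=
    Ideal.sub_mem _ (Ideal.mul_mem_right _ _ (Ideal.mem_sup_right (Ideal.mem_span_singleton_self w)))
      (Ideal.mem_sup_left hi)
  have q3 : ∀ n, coeff n (w * h' - i) ∈ RingHom.ker ev := by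
    intro n
    rw [RingHom.mem_ker, ← coeff_map, map_sub, map_mul, hiw, sub_self, coeff_zero]
  obtain ⟨N, hN⟩ := hg (RingHom.ker ev) Q q1 _ q2 q3
  obtain ⟨i', hi', z, hz, hsum⟩ := Submodule.mem_sup.1 hN
  obtain ⟨c, hc, rfl⟩ := Ideal.mem_span_singleton_mul.1 hz
  have : w * (C g ^ N * h' - c) ∈ I := by
    have : w * (C g ^ N * h' - c) = i' + C g ^ N * i := by linear_combination -hsum
    rw [this]
    exact I.add_mem hi' (I.mul_mem_left _ hi)
  have h2 := (Ideal.IsPrime.mem_or_mem ‹_› this).resolve_left hw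
  have h3 := Ideal.mem_map_of_mem (map ev) h2
  rw [map_sub, (RingHom.mem_ker).1 hc, sub_zero, map_mul, map_pow, map_C] at h3
  have h4 := Ideal.mul_mem_left _ (C ((ev g)⁻¹) ^ N) h3
  rwa [← mul_assoc, ← mul_pow, ← C_mul, inv_mul_cancel₀ hevg, C_1, one_pow, one_mul] at h4

theorem aux_sepgen (F L : Type) [Field F] [Field L] [Algebra F L] [Algebra.EssFiniteType F L]
    (h : IsReduced (TensorProduct F (AlgebraicClosure F) L)) :
    ∃ s : Finset L, IsTranscendenceBasis F ((↑) : s → L) ∧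
      Algebra.IsSeparable (IntermediateField.adjoin F (s : Set L)) L := by
  classical
  obtain _ | ⟨p, hp, hpk⟩ := CharP.exists' F
  · exact exists_isTranscendenceBasis_and_isSeparable_of_perfectField F L
  refine exists_isTranscendenceBasis_and_isSeparable_of_linearIndepOn_pow_of_essFiniteType
    p hp.out fun s hs ↦ ?_
  have : CharP (TensorProduct F (AlgebraicClosure F) L) p :=
    charP_of_injective_algebraMap (R := F) (algebraMap F _).injective p
  have : ExpChar (TensorProduct F (AlgebraicClosure F) L) p := .prime hp.out
  rw [linearIndepOn_finset_iff] at hs ⊢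
  intro c hc
  have hroot : ∀ i : L, ∃ e : AlgebraicClosure F, e ^ p = algebraMap F _ (c i) := fun i =>
    IsAlgClosed.exists_pow_nat_eq _ hp.out.pos
  choose e he using hroot
  have hz : (∑ i ∈ s, (e i) ⊗ₜ[F] i) ^ p = (0 : TensorProduct F (AlgebraicClosure F) L) := by
    rw [sum_pow_char]
    have : ∀ i ∈ s, ((e i) ⊗ₜ[F] i) ^ p = (1 : AlgebraicClosure F) ⊗ₜ[F] (c i • i ^ p) := by
      intro i _
      rw [Algebra.TensorProduct.tmul_pow, he, Algebra.algebraMap_eq_smul_one,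
        TensorProduct.smul_tmul]
    rw [Finset.sum_congr rfl this, ← TensorProduct.tmul_sum, hc, TensorProduct.tmul_zero]
  have hz' := pow_eq_zero_iff (hp.out.ne_zero) |>.1 hz
  have hli : LinearIndepOn F id (s : Set L) := by
    rw [linearIndepOn_finset_iff]
    exact hs
  let bb := Module.Basis.extend hli
  intro i hi
  have hsub := hli.subset_extend (Set.subset_univ (s : Set L))
  have h3 := congrArg (LinearMap.lTensor (AlgebraicClosure F) (bb.coord ⟨i, hsub hi⟩)) hz'
  rw [map_sum, map_zero, Finset.sum_eq_single i] at h3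
  · have h5 : bb.coord ⟨i, hsub hi⟩ i = 1 := by
      have : bb ⟨i, hsub hi⟩ = i := Module.Basis.extend_apply_self hli _
      have h7 := congrArg (bb.coord ⟨i, hsub hi⟩) this
      rw [← h7]
      simp
    rw [LinearMap.lTensor_tmul, h5] at h3
    have h6 := congrArg (TensorProduct.rid F (AlgebraicClosure F)) h3
    simp only [TensorProduct.rid_tmul, one_smul, map_zero] at h6
    have h4 := he i
    rw [h6, zero_pow hp.out.ne_zero] at h4
    exact ((map_eq_zero _).1 h4.symm)
  · intro j hj hji
    have : bb ⟨j, hsub hj⟩ = j := Module.Basis.extend_apply_self hli _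
    have h5 : bb.coord ⟨i, hsub hi⟩ j = 0 := by
      have h7 := congrArg (bb.coord ⟨i, hsub hi⟩) this
      rw [← h7]
      rw [Module.Basis.coord_apply, Module.Basis.repr_self, Finsupp.single_eq_of_ne]
      intro h
      exact hji (congrArg Subtype.val h).symm
    rw [LinearMap.lTensor_tmul, h5, TensorProduct.tmul_zero]
  · exact fun h => absurd hi h

theorem aux_common {ι W L : Type} [Fintype ι] [CommRing W] [CommRing L] (ρ : W →+* L)
    (B : Submonoid W) (y : ι → L) (h : ∀ j, ∃ b ∈ B, ∃ a, ρ b * y j = ρ a) :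
    ∃ b ∈ B, ∀ j, ∃ a, ρ b * y j = ρ a := by
  classical
  choose b hb a ha using h
  refine ⟨∏ j, b j, B.prod_mem fun j _ => hb j, fun j => ⟨(∏ k ∈ Finset.univ.erase j, b k) * a j, ?_⟩⟩
  rw [← Finset.prod_erase_mul _ _ (Finset.mem_univ j), map_mul, map_mul, mul_assoc, ha]

theorem aux_fraction {R F : Type} [CommRing R] [IsDomain R] [Field F] [Algebra R F]
    [IsFractionRing R F] {σ : Type} (q : MvPolynomial σ F) :
    ∃ c : R, c ≠ 0 ∧ ∃ q' : MvPolynomial σ R, map (algebraMap R F) q' = C (algebraMap R F c) * q := by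
  classical
  induction q using MvPolynomial.induction_on with
  | C a =>
    obtain ⟨x, y, hy, rfl⟩ := IsFractionRing.div_surjective R a
    refine ⟨y, nonZeroDivisors.ne_zero hy, C x, ?_⟩
    have : algebraMap R F y ≠ 0 := by
      simpa using nonZeroDivisors.ne_zero hy
    rw [map_C, ← C_mul, mul_div_cancel₀ _ this]
  | add p q hp hq =>
    obtain ⟨c, hc, p', hp'⟩ := hp
    obtain ⟨e, he, q', hq'⟩ := hq
    refine ⟨c * e, mul_ne_zero hc he, C e * p' + C c * q', ?_⟩
    simp only [map_add, map_mul, map_C, hp', hq']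
    ring
  | mul_X p i hp =>
    obtain ⟨c, hc, p', hp'⟩ := hp
    exact ⟨c, hc, p' * X i, by simp [hp']; ring⟩

theorem aux_core (S E L : Type) [CommRing S] [IsDomain S] [Field E] [Field L]
    [Algebra S E] [IsFractionRing S E] [Algebra E L] [Algebra S L] [IsScalarTower S E L]
    [FiniteDimensional E L] [Algebra.IsSeparable E L] {n : ℕ} (y : Fin n → L) :
    ∃ θ : L, IsIntegral S θ ∧ ∃ b : S, b ≠ 0 ∧ ∀ j, ∃ a : Polynomial S,
      algebraMap S L b * y j = Polynomial.aeval θ a := by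
  obtain ⟨α, hα⟩ := Field.exists_primitive_element E L
  have halg : IsAlgebraic S α :=
    (IsFractionRing.isAlgebraic_iff S E L).2 (Algebra.IsAlgebraic.isAlgebraic α)
  obtain ⟨c, hc, hint⟩ := halg.exists_integral_multiple
  refine ⟨c • α, hint, ?_⟩
  have hinj : Function.Injective (algebraMap S E) := IsFractionRing.injective S E
  have hcE : algebraMap S E c ≠ 0 := by simpa using fun h => hc (hinj (by simpa using h))
  have hsm : c • α = algebraMap S E c • α := by rw [algebraMap_smul]
  have hmem : ∀ l : L, ∃ q : Polynomial E, Polynomial.aeval (c • α) q = l := by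
    intro l
    have h1 : l ∈ IntermediateField.adjoin E {c • α} := by
      have : IntermediateField.adjoin E {c • α} = ⊤ := by
        rw [eq_top_iff, ← hα, IntermediateField.adjoin_simple_le_iff]
        have h2 : c • α ∈ IntermediateField.adjoin E {c • α} :=
          IntermediateField.mem_adjoin_simple_self E _
        have h3 : α = (algebraMap S E c)⁻¹ • (c • α) := by
          rw [hsm, smul_smul, inv_mul_cancel₀ hcE, one_smul]
        have h4 := (IntermediateField.adjoin E {c • α}).smul_mem h2 (x := (algebraMap S E c)⁻¹)
        rwa [← h3] at h4
      rw [this]; trivial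
    rw [← IntermediateField.mem_toSubalgebra,
      IntermediateField.adjoin_simple_toSubalgebra_of_isAlgebraic
        (Algebra.IsAlgebraic.isAlgebraic _),
      Algebra.adjoin_singleton_eq_range_aeval] at h1
    exact h1
  let B : Submonoid (Polynomial S) := (nonZeroDivisors S).map (Polynomial.C : S →+* Polynomial S)
  have hcommon := aux_common (Polynomial.aeval (R := S) (c • α)).toRingHom B y (fun j => by
    obtain ⟨q, hq⟩ := hmem (y j)
    obtain ⟨b, hb, hbq⟩ := IsLocalization.integerNormalization_spec (nonZeroDivisors S) q
    refine ⟨Polynomial.C b, ⟨b, hb, rfl⟩,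
      IsLocalization.integerNormalization (nonZeroDivisors S) q, ?_⟩
    have h5 := congrArg (Polynomial.aeval (c • α)) hbq
    rw [Polynomial.aeval_map_algebraMap] at h5
    change Polynomial.aeval (c • α) (Polynomial.C b) * y j = Polynomial.aeval (c • α) _
    rw [h5, Polynomial.aeval_C, ← hq, ← Algebra.smul_def]
    rw [← IsScalarTower.algebraMap_smul E b q, map_smul, algebraMap_smul])
  obtain ⟨_, ⟨b, hb, rfl⟩, h⟩ := hcommon
  refine ⟨b, nonZeroDivisors.ne_zero hb, fun j => ?_⟩
  obtain ⟨a, ha⟩ := h j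
  refine ⟨a, ?_⟩
  change Polynomial.aeval (c • α) (Polynomial.C b) * y j = Polynomial.aeval (c • α) _ at ha
  rwa [Polynomial.aeval_C] at ha

theorem aux_isFrac (R F L : Type) [CommRing R] [IsDomain R] [Field F] [Field L]
    [Algebra R F] [IsFractionRing R F] [Algebra F L] [Algebra R L] [IsScalarTower R F L]
    {ι : Type} (x : ι → L) (hx : AlgebraicIndependent F x)
    [Algebra (MvPolynomial ι R) (IntermediateField.adjoin F (Set.range x))]
    (hE : ∀ q, (algebraMap (MvPolynomial ι R) (IntermediateField.adjoin F (Set.range x)) q : L)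
      = aeval x q) :
    IsFractionRing (MvPolynomial ι R) (IntermediateField.adjoin F (Set.range x)) := by
  have hxR : AlgebraicIndependent R x := hx.restrictScalars (IsFractionRing.injective R F)
  have hinj : Function.Injective
      (algebraMap (MvPolynomial ι R) (IntermediateField.adjoin F (Set.range x))) := by
    intro p q hpq
    apply hxR
    change aeval x p = aeval x q
    rw [← hE, ← hE, hpq]
  have : FaithfulSMul (MvPolynomial ι R) (IntermediateField.adjoin F (Set.range x)) :=
    (faithfulSMul_iff_algebraMap_injective _ _).2 hinj
  apply IsFractionRing.of_field
  rintro ⟨z, hz⟩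
  obtain ⟨p, q, hpq⟩ := (IntermediateField.mem_adjoin_range_iff F x z).1 hz
  obtain ⟨c, hc, p', hp'⟩ := aux_fraction (R := R) p
  obtain ⟨e, he, q', hq'⟩ := aux_fraction (R := R) q
  have hne : ∀ c : R, c ≠ 0 → algebraMap F L (algebraMap R F c) ≠ 0 := by
    intro c hc h
    exact hc (IsFractionRing.injective R F ((algebraMap F L).injective (by simpa using h)))
  refine ⟨C e * p', C c * q', ?_⟩
  apply Subtype.ext
  rw [IntermediateField.coe_div, hE, hE]
  change z = _
  rw [hpq]
  have h1 := congrArg (aeval x) hp'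
  have h2 := congrArg (aeval x) hq'
  simp only [aeval_map_algebraMap, map_mul, aeval_C] at h1 h2 ⊢
  rw [h1, h2, IsScalarTower.algebraMap_apply R F L, IsScalarTower.algebraMap_apply R F L]
  have a1 := hne c hc
  have a2 := hne e he
  by_cases h0 : aeval x q = 0
  · rw [h0]; simp
  · field_simp

theorem aux_finSucc_map {R F : Type} [CommRing R] [CommRing F] (φ : R →+* F) {d : ℕ}
    (q : MvPolynomial (Fin (d + 1)) R) :
    finSuccEquiv F d (map φ q) = Polynomial.map (map φ) (finSuccEquiv R d q) := by
  induction q using MvPolynomial.induction_on with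
  | C a => simp [finSuccEquiv_apply]
  | add p q hp hq => simp [hp, hq]
  | mul_X p i hp =>
    rw [map_mul, map_mul, hp, map_mul, Polynomial.map_mul]
    congr 1
    refine Fin.cases ?_ (fun i => ?_) i <;> simp [finSuccEquiv_apply]

theorem aux_finSucc_eval {R E : Type} [CommRing R] [CommRing E] [Algebra R E] {d : ℕ}
    (z : Fin (d + 1) → E) (q : MvPolynomial (Fin (d + 1)) R) :
    aeval z q = Polynomial.eval₂ (aeval (fun i => z (Fin.succ i)) :
      MvPolynomial (Fin d) R →ₐ[R] E).toRingHom (z 0) (finSuccEquiv R d q) := by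
  induction q using MvPolynomial.induction_on with
  | C a => simp [finSuccEquiv_apply]
  | add p q hp hq => simp [hp, hq, Polynomial.eval₂_add]
  | mul_X p i hp =>
    rw [map_mul, map_mul, hp, Polynomial.eval₂_mul]
    congr 1
    refine Fin.cases ?_ (fun i => ?_) i <;> simp [finSuccEquiv_apply]

theorem aux_findim (F L : Type) [Field F] [Field L] [Algebra F L] [Algebra.EssFiniteType F L]
    (E : IntermediateField F L) [Algebra.IsAlgebraic E L] : FiniteDimensional E L := by
  have := Algebra.EssFiniteType.of_comp F E L
  obtain ⟨S, hS⟩ := IntermediateField.fg_top E L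
  have h2 : FiniteDimensional E (IntermediateField.adjoin E (S : Set L)) :=
    IntermediateField.finiteDimensional_adjoin fun x _ =>
      (Algebra.IsAlgebraic.isAlgebraic x).isIntegral
  rw [hS] at h2
  exact Module.Finite.equiv (IntermediateField.topEquiv (F := E) (E := L)).toLinearEquiv

theorem aux_data2 (R F L : Type) [CommRing R] [IsDomain R] [UniqueFactorizationMonoid R]
    [Field F] [Field L] [Algebra R F] [IsFractionRing R F] [Algebra F L] [Algebra R L]
    [IsScalarTower R F L] [Algebra.EssFiniteType F L] {n d : ℕ} (y : Fin n → L)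
    (x : Fin d → L) (hx : IsTranscendenceBasis F x)
    (hsep : Algebra.IsSeparable (IntermediateField.adjoin F (Set.range x)) L) :
    ∃ (z : Fin (d + 1) → L) (f : MvPolynomial (Fin (d + 1)) R)
      (b : MvPolynomial (Fin d) R) (a : Fin n → MvPolynomial (Fin (d + 1)) R),
      (finSuccEquiv R d f).Monic ∧ Irreducible (map (algebraMap R F) f) ∧
      (∀ q, aeval z q = 0 ↔ f ∣ q) ∧ b ≠ 0 ∧ aeval z (rename Fin.succ b) ≠ 0 ∧
      ∀ j, aeval z (rename Fin.succ b) * y j = aeval z (a j) := by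
  have hxF : AlgebraicIndependent F x := hx.1
  have hxR : AlgebraicIndependent R x := hxF.restrictScalars (IsFractionRing.injective R F)
  have hmemF : ∀ q : MvPolynomial (Fin d) F,
      (aeval x : _ →ₐ[F] L).toRingHom q ∈ IntermediateField.adjoin F (Set.range x) := by
    intro q
    refine (IntermediateField.mem_adjoin_range_iff F x _).2 ⟨q, 1, ?_⟩
    simp
  have hmemR : ∀ q : MvPolynomial (Fin d) R,
      (aeval x : _ →ₐ[R] L).toRingHom q ∈ IntermediateField.adjoin F (Set.range x) := by
    intro q
    have := hmemF (map (algebraMap R F) q)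
    change aeval x (map (algebraMap R F) q) ∈ _ at this
    rwa [aeval_map_algebraMap] at this
  let aR : Algebra (MvPolynomial (Fin d) R) (IntermediateField.adjoin F (Set.range x)) :=
    ((aeval x : _ →ₐ[R] L).toRingHom.codRestrict _ hmemR).toAlgebra
  let aF : Algebra (MvPolynomial (Fin d) F) (IntermediateField.adjoin F (Set.range x)) :=
    ((aeval x : _ →ₐ[F] L).toRingHom.codRestrict _ hmemF).toAlgebra
  let aL : Algebra (MvPolynomial (Fin d) R) L := (aeval x : _ →ₐ[R] L).toRingHom.toAlgebra
  have hR : ∀ q, (algebraMap (MvPolynomial (Fin d) R)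
    (IntermediateField.adjoin F (Set.range x)) q : L) = aeval x q := fun q => rfl
  have hF : ∀ q, (algebraMap (MvPolynomial (Fin d) F)
    (IntermediateField.adjoin F (Set.range x)) q : L) = aeval x q := fun q => rfl
  have hL : ∀ q, algebraMap (MvPolynomial (Fin d) R) L q = aeval x q := fun q => rfl
  have fR := aux_isFrac R F L x hxF hR
  have : IsFractionRing F F := by
    apply IsFractionRing.of_field
    intro z
    exact ⟨z, 1, by simp⟩
  have fF := aux_isFrac F F L x hxF hF
  have tow : IsScalarTower (MvPolynomial (Fin d) R)
      (IntermediateField.adjoin F (Set.range x)) L := IsScalarTower.of_algebraMap_eq fun q => rfl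
  have hfd := aux_findim F L (IntermediateField.adjoin F (Set.range x))
  obtain ⟨θ, hθ, b, hb, h⟩ := aux_core (MvPolynomial (Fin d) R)
    (IntermediateField.adjoin F (Set.range x)) L y
  choose a ha using h
  have hinj : Function.Injective (algebraMap (MvPolynomial (Fin d) R) L) := hxR
  have tf : Module.IsTorsionFree (MvPolynomial (Fin d) R) L :=
    (Module.isTorsionFree_iff_algebraMap_injective).2 hinj
  have key : ∀ q : MvPolynomial (Fin (d + 1)) R,
      aeval (Fin.cons θ x : Fin (d + 1) → L) q = Polynomial.aeval θ (finSuccEquiv R d q) := by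
    intro q
    rw [aux_finSucc_eval]
    rfl
  have keyb : aeval (Fin.cons θ x : Fin (d + 1) → L) (rename Fin.succ b) = aeval x b := by
    rw [aeval_rename]
    rfl
  have hmonic := minpoly.monic hθ
  refine ⟨Fin.cons θ x, (finSuccEquiv R d).symm (minpoly _ θ), b,
    fun j => (finSuccEquiv R d).symm (a j), ?_, ?_, ?_, hb, ?_, ?_⟩
  · simpa using hmonic
  · rw [← MulEquiv.irreducible_iff (finSuccEquiv F d), aux_finSucc_map, AlgEquiv.apply_symm_apply,
      Polynomial.Monic.irreducible_iff_irreducible_map_fraction_map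
        (K := IntermediateField.adjoin F (Set.range x)) (hmonic.map _), Polynomial.map_map]
    have : (algebraMap (MvPolynomial (Fin d) F) (IntermediateField.adjoin F (Set.range x))).comp
        (map (algebraMap R F)) = algebraMap (MvPolynomial (Fin d) R) _ := by
      refine RingHom.ext fun q => Subtype.ext ?_
      rw [RingHom.comp_apply, hF, hR, aeval_map_algebraMap]
    rw [this, ← minpoly.isIntegrallyClosed_eq_field_fractions' _ hθ]
    exact minpoly.irreducible (Algebra.IsAlgebraic.isAlgebraic θ).isIntegral
  · intro q
    rw [key, minpoly.isIntegrallyClosed_dvd_iff hθ, ← map_dvd_iff (finSuccEquiv R d),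
      AlgEquiv.apply_symm_apply]
  · rw [keyb, ← hL]
    exact fun h => hb (hinj (by simpa using h))
  · intro j
    rw [keyb, key, AlgEquiv.apply_symm_apply, ← ha, hL]

theorem aux_data (R F L : Type) [CommRing R] [IsDomain R] [UniqueFactorizationMonoid R]
    [Field F] [Field L] [Algebra R F] [IsFractionRing R F] [Algebra F L] [Algebra R L]
    [IsScalarTower R F L] [Algebra.EssFiniteType F L]
    (h : IsReduced (TensorProduct F (AlgebraicClosure F) L)) {n : ℕ} (y : Fin n → L) :
    ∃ (d : ℕ) (z : Fin (d + 1) → L) (f : MvPolynomial (Fin (d + 1)) R)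
      (b : MvPolynomial (Fin d) R) (a : Fin n → MvPolynomial (Fin (d + 1)) R),
      Algebra.trdeg F L = d ∧
      (finSuccEquiv R d f).Monic ∧ Irreducible (map (algebraMap R F) f) ∧
      (∀ q, aeval z q = 0 ↔ f ∣ q) ∧ b ≠ 0 ∧ aeval z (rename Fin.succ b) ≠ 0 ∧
      ∀ j, aeval z (rename Fin.succ b) * y j = aeval z (a j) := by
  obtain ⟨s, hs, hsep⟩ := aux_sepgen F L h
  let e : Fin s.card ≃ s := s.equivFin.symm
  have hx := hs.comp_equiv e
  have hr : Set.range (((↑) : s → L) ∘ e) = (s : Set L) := by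
    rw [Set.range_comp, e.surjective.range_eq, Set.image_univ]
    simp
  rw [← hr] at hsep
  obtain ⟨z, f, b, a, h⟩ := aux_data2 R F L y _ hx hsep
  refine ⟨s.card, z, f, b, a, ?_, h⟩
  rw [← hs.cardinalMk_eq_trdeg]
  simp

theorem aux_clear {R W : Type} [CommRing R] [CommRing W] (σ : R →+* W) {s : ℕ} (b : W)
    (a : Fin s → W) (P : MvPolynomial (Fin s) R) :
    ∃ (N : ℕ) (Q : W), ∀ (E : Type) [CommRing E] (ρ : W →+* E) (η : Fin s → E),
      (∀ j, ρ b * η j = ρ (a j)) → ρ b ^ N * eval₂ (ρ.comp σ) η P = ρ Q := by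
  induction P using MvPolynomial.induction_on with
  | C c => exact ⟨0, σ c, fun E _ ρ η _ => by simp⟩
  | add p q hp hq =>
    obtain ⟨N, Q, h⟩ := hp
    obtain ⟨N', Q', h'⟩ := hq
    refine ⟨N + N', b ^ N' * Q + b ^ N * Q', fun E _ ρ η hη => ?_⟩
    rw [eval₂_add, map_add, map_mul, map_mul, ← h E ρ η hη, ← h' E ρ η hη, map_pow, map_pow]
    ring
  | mul_X p i hp =>
    obtain ⟨N, Q, h⟩ := hp
    refine ⟨N + 1, Q * a i, fun E _ ρ η hη => ?_⟩
    rw [eval₂_mul, eval₂_X, map_mul, ← h E ρ η hη, ← hη]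
    ring

theorem aux_spec (R L : Type) [CommRing R] [IsDomain R] [Field L] [Algebra R L] {s m : ℕ}
    (I : Ideal (MvPolynomial (Fin s) R)) [I.IsPrime] (y : Fin s → L)
    (hker : ∀ P, aeval y P = 0 ↔ P ∈ I) (z : Fin m → L) (f : MvPolynomial (Fin m) R)
    (hf : ∀ q, aeval z q = 0 ↔ f ∣ q) (b : MvPolynomial (Fin m) R)
    (hb : aeval z b ≠ 0) (a : Fin s → MvPolynomial (Fin m) R)
    (hab : ∀ j, aeval z b * y j = aeval z (a j)) (v : MvPolynomial (Fin s) R)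
    (hv : aeval y v ≠ 0) (u : Fin m → MvPolynomial (Fin s) R)
    (huv : ∀ i, aeval y v * z i = aeval y (u i)) :
    ∃ g : R, g ≠ 0 ∧ ∀ (K : Type) [Field K] (ev : R →+* K), Function.Surjective ev → ev g ≠ 0 →
      ∀ (M : Type) [Field M] [Algebra K M] (ζ : Fin m → M),
      (∀ q : MvPolynomial (Fin m) K, aeval ζ q = 0 ↔ map ev f ∣ q) →
      aeval ζ (map ev b) ≠ 0 →
      ∃ η : Fin s → M, (∀ h : MvPolynomial (Fin s) K, aeval η h = 0 ↔ h ∈ I.map (map ev)) ∧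
        ∃ (v' : MvPolynomial (Fin s) K) (u' : Fin m → MvPolynomial (Fin s) K),
          aeval η v' ≠ 0 ∧ ∀ i, aeval η v' * ζ i = aeval η (u' i) := by
  classical
  -- clearing in L
  have cl2 : ∀ q : MvPolynomial (Fin m) R, ∃ (N : ℕ) (Q : MvPolynomial (Fin s) R),
      aeval y v ^ N * aeval z q = aeval y Q ∧
      ∀ (E : Type) [CommRing E] (ρ : MvPolynomial (Fin s) R →+* E) (η : Fin m → E),
      (∀ j, ρ v * η j = ρ (u j)) → ρ v ^ N * eval₂ (ρ.comp C) η q = ρ Q := by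
    intro q
    obtain ⟨N, Q, h⟩ := aux_clear (C : R →+* MvPolynomial (Fin s) R) v u q
    refine ⟨N, Q, ?_, h⟩
    have := h L (aeval y : _ →ₐ[R] L).toRingHom z huv
    have h2 : (aeval y : _ →ₐ[R] L).toRingHom.comp C = algebraMap R L := by
      ext c; simp
    rw [h2] at this
    exact this
  have cl1 : ∀ q : MvPolynomial (Fin s) R, ∃ (N : ℕ) (Q : MvPolynomial (Fin m) R),
      aeval z b ^ N * aeval y q = aeval z Q ∧
      ∀ (E : Type) [CommRing E] (ρ : MvPolynomial (Fin m) R →+* E) (η : Fin s → E),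
      (∀ j, ρ b * η j = ρ (a j)) → ρ b ^ N * eval₂ (ρ.comp C) η q = ρ Q := by
    intro q
    obtain ⟨N, Q, h⟩ := aux_clear (C : R →+* MvPolynomial (Fin m) R) b a q
    refine ⟨N, Q, ?_, h⟩
    have := h L (aeval z : _ →ₐ[R] L).toRingHom y hab
    have h2 : (aeval z : _ →ₐ[R] L).toRingHom.comp C = algebraMap R L := by
      ext c; simp
    rw [h2] at this
    exact this
  obtain ⟨Nb, β, hβL, hβ⟩ := cl2 b
  have hβ0 : aeval y β ≠ 0 := by
    rw [← hβL]; exact mul_ne_zero (pow_ne_zero _ hv) hb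
  have hw : v * β ∉ I := by
    rw [← hker, map_mul]; exact mul_ne_zero hv hβ0
  obtain ⟨g, hg0, hg⟩ := aux_generic_nzd I (v * β) hw
  refine ⟨g, hg0, ?_⟩
  intro K _ ev hev hgt M _ _ ζ hζ hbζ
  have nzd := hg K ev hev hgt
  have nzd' : ∀ (k : ℕ) (h : MvPolynomial (Fin s) K),
      map ev (v * β) ^ k * h ∈ I.map (map ev) → h ∈ I.map (map ev) := by
    intro k
    induction k with
    | zero => intro h hh; simpa using hh
    | succ k ih =>
      intro h hh
      refine ih h (nzd _ ?_)
      rwa [← mul_assoc, ← pow_succ']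
  let ρζ : MvPolynomial (Fin m) R →+* M := (aeval ζ : _ →ₐ[K] M).toRingHom.comp (map ev)
  have hρζ : ∀ q, ρζ q = aeval ζ (map ev q) := fun q => rfl
  let η : Fin s → M := fun j => ρζ (a j) / ρζ b
  have hη : ∀ j, ρζ b * η j = ρζ (a j) := fun j => mul_div_cancel₀ _ hbζ
  have hρC : ρζ.comp C = (algebraMap K M).comp ev := by
    ext c; simp [ρζ]
  have heη : ∀ P : MvPolynomial (Fin s) R, eval₂ (ρζ.comp C) η P = aeval η (map ev P) := by
    intro P
    rw [hρC, aeval_def, eval₂_map]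
  have hρ0 : ∀ q, aeval z q = 0 → ρζ q = 0 := by
    intro q hq
    rw [hρζ, hζ]
    exact map_dvd _ ((hf q).1 hq)
  have hsub : I.map (map ev) ≤ RingHom.ker (aeval η : MvPolynomial (Fin s) K →ₐ[K] M) := by
    rw [Ideal.map_le_iff_le_comap]
    intro P hP
    rw [Ideal.mem_comap, RingHom.mem_ker, ← heη]
    obtain ⟨N, Q, h1, h2⟩ := cl1 P
    have h3 := h2 M ρζ η hη
    rw [(hker P).2 hP, mul_zero] at h1
    rw [hρ0 Q h1.symm] at h3
    exact (mul_eq_zero.1 h3).resolve_left (pow_ne_zero _ hbζ)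
  have hmain : ∀ h : MvPolynomial (Fin s) K, aeval η h = 0 → h ∈ I.map (map ev) := by
    intro h hh
    obtain ⟨P, rfl⟩ := map_surjective ev hev h
    obtain ⟨N, Q, h1, h2⟩ := cl1 P
    have h3 := h2 M ρζ η hη
    rw [heη, hh, mul_zero] at h3
    have hdvd := (hζ _).1 h3.symm
    let A := MvPolynomial (Fin s) K ⧸ I.map (map ev)
    let vA : A := Ideal.Quotient.mk _ (map ev v)
    let E := Localization.Away vA
    let π : MvPolynomial (Fin s) R →+* E :=
      ((algebraMap A E).comp (Ideal.Quotient.mk _)).comp (map ev)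
    have hπI : ∀ q ∈ I, π q = 0 := by
      intro q hq
      have : (Ideal.Quotient.mk (I.map (map ev))) (map ev q) = 0 :=
        Ideal.Quotient.eq_zero_iff_mem.2 (Ideal.mem_map_of_mem _ hq)
      change algebraMap A E (Ideal.Quotient.mk (I.map (map ev)) (map ev q)) = 0
      rw [this, map_zero]
    have hπv : IsUnit (π v) := IsLocalization.Away.algebraMap_isUnit vA
    let ζE : Fin m → E := fun i => (↑(hπv.unit⁻¹) : E) * π (u i)
    have hζE : ∀ i, π v * ζE i = π (u i) := by
      intro i
      change π v * ((↑(hπv.unit⁻¹) : E) * π (u i)) = _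
      rw [← mul_assoc, IsUnit.mul_val_inv, one_mul]
    let κ : K →+* E := ((algebraMap A E).comp (Ideal.Quotient.mk _)).comp C
    let τ : MvPolynomial (Fin m) K →+* E := eval₂Hom κ ζE
    have hκ : π.comp C = κ.comp ev := by
      ext c
      simp [π, κ]
    let ρE : MvPolynomial (Fin m) R →+* E := τ.comp (map ev)
    have hρE : ∀ q, ρE q = eval₂ (π.comp C) ζE q := by
      intro q
      change eval₂ κ ζE (map ev q) = _
      rw [eval₂_map, hκ]
    have hρEC : ρE.comp C = π.comp C := by
      ext c
      rw [RingHom.comp_apply, hρE, eval₂_C]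
    have hρEf : ρE f = 0 := by
      obtain ⟨n, q, q1, q2⟩ := cl2 f
      have q3 := q2 E π ζE hζE
      rw [(hf f).2 dvd_rfl, mul_zero] at q1
      rw [hπI q ((hker q).1 q1.symm), ← hρE] at q3
      exact (hπv.pow n).mul_right_eq_zero.1 q3
    have hβE := hβ E π ζE hζE
    rw [← hρE] at hβE
    have hρEb : ∀ j, ρE b * π (X j) = ρE (a j) := by
      intro j
      obtain ⟨n, α, q1, q2⟩ := cl2 (a j)
      have q3 := q2 E π ζE hζE
      rw [← hρE] at q3
      have q4 : v ^ n * β * X j - v ^ Nb * α ∈ I := by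
        rw [← hker]
        simp only [map_sub, map_mul, map_pow, aeval_X]
        rw [← hβL, ← q1, ← hab]
        ring
      have q5 := hπI _ q4
      simp only [map_sub, map_mul, map_pow] at q5
      rw [← hβE, ← q3] at q5
      have q6 : π v ^ (n + Nb) * (ρE b * π (X j) - ρE (a j)) = 0 := by
        rw [← q5]; ring
      exact sub_eq_zero.1 ((hπv.pow _).mul_right_eq_zero.1 q6)
    have h4 := h2 E ρE (fun j => π (X j)) hρEb
    have h5 : eval₂ (ρE.comp C) (fun j => π (X j)) P = π P := by
      rw [hρEC]
      have : eval₂Hom (π.comp C) (fun j => π (X j)) = π := by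
        apply MvPolynomial.ringHom_ext
        · intro c; simp
        · intro i; simp
      exact congrArg (fun φ : MvPolynomial (Fin s) R →+* E => φ P) this
    have h6 : ρE Q = 0 := by
      obtain ⟨c, hc⟩ := hdvd
      change τ (map ev Q) = 0
      rw [hc, map_mul]
      have : τ (map ev f) = 0 := hρEf
      rw [this, zero_mul]
    rw [h5, h6] at h4
    have h7 : π (β ^ N * P) = 0 := by
      rw [map_mul, map_pow, ← hβE, mul_pow, mul_assoc, h4, mul_zero]
    have h8 : algebraMap A E (Ideal.Quotient.mk _ (map ev (β ^ N * P))) = 0 := h7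
    rw [IsLocalization.map_eq_zero_iff (Submonoid.powers vA)] at h8
    obtain ⟨⟨_, k, rfl⟩, h9⟩ := h8
    have h10 : map ev (v ^ k * (β ^ N * P)) ∈ I.map (map ev) := by
      rw [← Ideal.Quotient.eq_zero_iff_mem, map_mul, map_mul, map_pow, map_pow]
      exact h9
    apply nzd' (k + N)
    have h11 : map ev (v * β) ^ (k + N) * map ev P =
        map ev (v ^ N * β ^ k) * map ev (v ^ k * (β ^ N * P)) := by
      simp only [map_mul, map_pow]; ring
    rw [h11]
    exact Ideal.mul_mem_left _ _ h10
  refine ⟨η, fun h => ⟨hmain h, fun hh => hsub hh⟩, map ev v, fun i => map ev (u i), ?_, ?_⟩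
  · intro h
    have h1 := hmain _ h
    have h2 : (1 : MvPolynomial (Fin s) K) ∈ I.map (map ev) := by
      apply nzd
      rw [mul_one, map_mul]
      exact Ideal.mul_mem_right _ _ h1
    have h3 : aeval η (1 : MvPolynomial (Fin s) K) = 0 := hsub h2
    simp at h3
  · intro i
    obtain ⟨n, V, v1, v2⟩ := cl1 v
    obtain ⟨k, U, u1, u2⟩ := cl1 (u i)
    have h1 : aeval z (V * b ^ k * X i - b ^ n * U) = 0 := by
      simp only [map_sub, map_mul, map_pow, aeval_X]
      rw [← v1, ← u1, ← huv]
      ring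
    have h2 := hρ0 _ h1
    have v3 := v2 M ρζ η hη
    have u3 := u2 M ρζ η hη
    rw [heη] at v3 u3
    have hX : ρζ (X i) = ζ i := by rw [hρζ]; simp
    simp only [map_sub, map_mul, map_pow, hX] at h2
    rw [← v3, ← u3] at h2
    have h3 : ρζ b ^ (n + k) * (aeval η (map ev v) * ζ i - aeval η (map ev (u i))) = 0 := by
      rw [← h2]; ring
    exact sub_eq_zero.1 ((mul_eq_zero.1 h3).resolve_left (pow_ne_zero _ hbζ))

theorem aux_alg_trdeg (K A M : Type) [Field K] [CommRing A] [IsDomain A] [Field M] [Algebra K A]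
    [Algebra A M] [Algebra K M] [IsScalarTower K A M]
    (hinj : Function.Injective (algebraMap A M)) {m : ℕ} (ζ : Fin m → M)
    (hζ : ∀ i, IsAlgebraic A (ζ i))
    (hgen : ∀ l : M, ∃ p q : MvPolynomial (Fin m) K, l = aeval ζ p / aeval ζ q) :
    Algebra.trdeg K A = Algebra.trdeg K M := by
  have h1 : ∀ p : MvPolynomial (Fin m) K, IsAlgebraic A (aeval ζ p) := by
    intro p
    induction p using MvPolynomial.induction_on with
    | C c =>
      rw [aeval_C, IsScalarTower.algebraMap_apply K A M]
      exact isAlgebraic_algebraMap _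
    | add p q hp hq => rw [map_add]; exact hp.add hq
    | mul_X p i hp => rw [map_mul, aeval_X]; exact hp.mul (hζ i)
  have h2 : Algebra.IsAlgebraic A M := ⟨fun l => by
    obtain ⟨p, q, rfl⟩ := hgen l
    rw [div_eq_mul_inv]
    exact (h1 p).mul (h1 q).inv⟩
  have : FaithfulSMul A M := (faithfulSMul_iff_algebraMap_injective _ _).2 hinj
  have h3 := trdeg_add_eq K A (A := M)
  rw [trdeg_eq_zero (R := A) (A := M), add_zero] at h3
  exact h3

theorem aux_dim (K M : Type) [Field K] [Field M] [Algebra K M] {s m : ℕ}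
    (J : Ideal (MvPolynomial (Fin s) K)) (η : Fin s → M)
    (hη : ∀ h : MvPolynomial (Fin s) K, aeval η h = 0 ↔ h ∈ J) (ζ : Fin m → M)
    (hgen : ∀ l : M, ∃ p q : MvPolynomial (Fin m) K, l = aeval ζ p / aeval ζ q)
    (v : MvPolynomial (Fin s) K) (u : Fin m → MvPolynomial (Fin s) K) (hv : aeval η v ≠ 0)
    (huv : ∀ i, aeval η v * ζ i = aeval η (u i)) (d : ℕ) (hd : Algebra.trdeg K M = d) :
    J.IsPrime ∧ ringKrullDim (MvPolynomial (Fin s) K ⧸ J) = d := by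
  have hJ : RingHom.ker (aeval η : MvPolynomial (Fin s) K →ₐ[K] M) = J := by
    ext h; rw [RingHom.mem_ker, hη]
  have hp : J.IsPrime := by rw [← hJ]; exact RingHom.ker_isPrime _
  refine ⟨hp, aux_dim_trdeg K _ d ?_⟩
  rw [← hd]
  let φ : (MvPolynomial (Fin s) K ⧸ J) →ₐ[K] M := Ideal.Quotient.liftₐ J (aeval η)
    (fun a ha => (hη a).2 ha)
  have hφ : ∀ h, φ (Ideal.Quotient.mk J h) = aeval η h := fun h => rfl
  let _ : Algebra (MvPolynomial (Fin s) K ⧸ J) M := φ.toRingHom.toAlgebra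
  have hmap : ∀ h, algebraMap (MvPolynomial (Fin s) K ⧸ J) M (Ideal.Quotient.mk J h) = aeval η h :=
    fun h => rfl
  have tow : IsScalarTower K (MvPolynomial (Fin s) K ⧸ J) M :=
    IsScalarTower.of_algebraMap_eq fun c => (φ.commutes c).symm
  have hinj : Function.Injective (algebraMap (MvPolynomial (Fin s) K ⧸ J) M) := by
    rw [injective_iff_map_eq_zero]
    intro x hx
    obtain ⟨h, rfl⟩ := Ideal.Quotient.mk_surjective x
    rw [hmap, hη] at hx
    exact Ideal.Quotient.eq_zero_iff_mem.2 hx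
  refine aux_alg_trdeg K _ M hinj ζ (fun i => ?_) hgen
  refine ⟨Polynomial.C (Ideal.Quotient.mk J v) * Polynomial.X -
    Polynomial.C (Ideal.Quotient.mk J (u i)), ?_, ?_⟩
  · intro h
    have h2 := congrArg (fun p => Polynomial.coeff p 1) h
    simp [Polynomial.coeff_C] at h2
    rw [Ideal.Quotient.eq_zero_iff_mem, ← hη] at h2
    exact hv h2
  · simp [hmap, huv]

theorem aux_finSucc_rename {K : Type} [CommRing K] {d : ℕ} (b : MvPolynomial (Fin d) K) :
    finSuccEquiv K d (rename Fin.succ b) = Polynomial.C b := by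
  induction b using MvPolynomial.induction_on with
  | C c => simp [finSuccEquiv_apply]
  | add p q hp hq => simp [hp, hq]
  | mul_X p i hp =>
    rw [map_mul, map_mul, hp, rename_X, finSuccEquiv_X_succ, ← Polynomial.C_mul]

theorem aux_hyper_trdeg (K M : Type) [Field K] [Field M] [Algebra K M] {d : ℕ}
    (f : MvPolynomial (Fin (d + 1)) K)
    (hmon : (finSuccEquiv K d f).Monic) (ζ : Fin (d + 1) → M)
    (h1 : ∀ q : MvPolynomial (Fin (d + 1)) K, aeval ζ q = 0 ↔ f ∣ q)
    (h2 : ∀ b : MvPolynomial (Fin d) K, b ≠ 0 → aeval ζ (rename Fin.succ b) ≠ 0)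
    (h3 : ∀ l : M, ∃ p q : MvPolynomial (Fin (d + 1)) K, l = aeval ζ p / aeval ζ q) :
    Algebra.trdeg K M = d := by
  let ψ : MvPolynomial (Fin d) K →ₐ[K] M := aeval (fun i => ζ (Fin.succ i))
  let _ : Algebra (MvPolynomial (Fin d) K) M := ψ.toRingHom.toAlgebra
  have hψ : ∀ b, algebraMap (MvPolynomial (Fin d) K) M b = aeval ζ (rename Fin.succ b) := by
    intro b
    rw [aeval_rename]
    rfl
  have tow : IsScalarTower K (MvPolynomial (Fin d) K) M :=
    IsScalarTower.of_algebraMap_eq fun c => (ψ.commutes c).symm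
  have hinj : Function.Injective (algebraMap (MvPolynomial (Fin d) K) M) := by
    rw [injective_iff_map_eq_zero]
    intro b hb
    by_contra hne
    exact h2 b hne (by rw [← hψ, hb])
  rw [← aux_alg_trdeg K (MvPolynomial (Fin d) K) M hinj ζ ?_ h3, MvPolynomial.trdeg_of_isDomain]
  · simp
  · refine fun i => Fin.cases ?_ (fun i => ?_) i
    · refine ⟨finSuccEquiv K d f, hmon.ne_zero, ?_⟩
      have := (h1 f).2 dvd_rfl
      rw [aux_finSucc_eval] at this
      exact this
    · have : ζ (Fin.succ i) = algebraMap (MvPolynomial (Fin d) K) M (X i) := by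
        rw [hψ]; simp
      rw [this]
      exact isAlgebraic_algebraMap _

theorem aux_hyper (K : Type) [Field K] {d : ℕ} (f : MvPolynomial (Fin (d + 1)) K)
    (hf : Irreducible f) (hmon : (finSuccEquiv K d f).Monic) :
    ∃ (M : Type) (_ : Field M) (_ : Algebra K M) (ζ : Fin (d + 1) → M),
      (∀ q : MvPolynomial (Fin (d + 1)) K, aeval ζ q = 0 ↔ f ∣ q) ∧
      (∀ b : MvPolynomial (Fin d) K, b ≠ 0 → aeval ζ (rename Fin.succ b) ≠ 0) ∧
      (∀ l : M, ∃ p q : MvPolynomial (Fin (d + 1)) K, l = aeval ζ p / aeval ζ q) ∧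
      Algebra.trdeg K M = d := by
  let J : Ideal (MvPolynomial (Fin (d + 1)) K) := Ideal.span {f}
  have hJ : J.IsPrime := (Ideal.span_singleton_prime hf.ne_zero).2 hf.prime
  let D := MvPolynomial (Fin (d + 1)) K ⧸ J
  let M := FractionRing D
  let φ : MvPolynomial (Fin (d + 1)) K →ₐ[K] M :=
    (IsScalarTower.toAlgHom K D M).comp (Ideal.Quotient.mkₐ K J)
  let ζ : Fin (d + 1) → M := fun i => φ (X i)
  have hφ : ∀ q, aeval ζ q = φ q := by
    intro q
    exact (DFunLike.congr_fun (MvPolynomial.aeval_unique φ) q).symm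
  have h1 : ∀ q : MvPolynomial (Fin (d + 1)) K, aeval ζ q = 0 ↔ f ∣ q := by
    intro q
    rw [hφ]
    change algebraMap D M (Ideal.Quotient.mk J q) = 0 ↔ _
    rw [← Ideal.mem_span_singleton, ← Ideal.Quotient.eq_zero_iff_mem]
    constructor
    · intro h
      exact IsFractionRing.injective D M (by rw [h, map_zero])
    · intro h
      change Ideal.Quotient.mk J q = 0 at h
      rw [h, map_zero]
  have hdeg : 0 < (finSuccEquiv K d f).natDegree := by
    apply hmon.natDegree_pos_of_not_isUnit
    rw [MulEquiv.isUnit_map]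
    exact hf.not_isUnit
  have h2 : ∀ b : MvPolynomial (Fin d) K, b ≠ 0 → aeval ζ (rename Fin.succ b) ≠ 0 := by
    intro b hb h
    rw [h1, ← map_dvd_iff (finSuccEquiv K d), aux_finSucc_rename] at h
    exact hmon.not_dvd_of_natDegree_lt (by simpa using hb) (by simpa using hdeg) h
  have h3 : ∀ l : M, ∃ p q : MvPolynomial (Fin (d + 1)) K, l = aeval ζ p / aeval ζ q := by
    intro l
    obtain ⟨p, q, hq, rfl⟩ := IsFractionRing.div_surjective D l
    obtain ⟨p, rfl⟩ := Ideal.Quotient.mk_surjective p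
    obtain ⟨q, rfl⟩ := Ideal.Quotient.mk_surjective q
    refine ⟨p, q, ?_⟩
    rw [hφ, hφ]
    rfl
  refine ⟨M, inferInstance, inferInstance, ζ, h1, h2, h3, aux_hyper_trdeg K M f hmon ζ h1 h2 h3⟩

theorem aux_mapfrac {R F : Type} [CommRing R] [IsDomain R] [Field F] [Algebra R F]
    [IsFractionRing R F] {s : ℕ} (I : Ideal (MvPolynomial (Fin s) R)) [hI : I.IsPrime]
    (hcap : ∀ c : R, C c ∈ I → c = 0) :
    (I.map (map (algebraMap R F) : MvPolynomial (Fin s) R →+* MvPolynomial (Fin s) F)).IsPrime ∧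
    ∀ P, map (algebraMap R F) P ∈
      I.map (map (algebraMap R F) : MvPolynomial (Fin s) R →+* MvPolynomial (Fin s) F) → P ∈ I := by
  have hinj := map_injective (σ := Fin s) (algebraMap R F) (IsFractionRing.injective R F)
  have h1 : ∀ q ∈ I.map (map (algebraMap R F) : MvPolynomial (Fin s) R →+* MvPolynomial (Fin s) F),
      ∃ c : R, c ≠ 0 ∧ ∃ q' ∈ I, map (algebraMap R F) q' = C (algebraMap R F c) * q := by
    intro q hq
    refine Submodule.span_induction ?_ ?_ ?_ ?_ hq
    · rintro _ ⟨q, hq, rfl⟩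
      exact ⟨1, one_ne_zero, q, hq, by simp⟩
    · exact ⟨1, one_ne_zero, 0, I.zero_mem, by simp⟩
    · rintro x y _ _ ⟨c, hc, x', hx, hx'⟩ ⟨e, he, y', hy, hy'⟩
      refine ⟨c * e, mul_ne_zero hc he, C e * x' + C c * y',
        I.add_mem (I.mul_mem_left _ hx) (I.mul_mem_left _ hy), ?_⟩
      simp only [map_add, map_mul, map_C, hx', hy']
      ring
    · rintro a x _ ⟨c, hc, x', hx, hx'⟩
      obtain ⟨e, he, a', ha'⟩ := aux_fraction (R := R) a
      refine ⟨e * c, mul_ne_zero he hc, a' * x', I.mul_mem_left _ hx, ?_⟩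
      simp only [map_mul, smul_eq_mul, hx', ha']
      ring
  have h2 : ∀ P, map (algebraMap R F) P ∈
      I.map (map (algebraMap R F) : MvPolynomial (Fin s) R →+* MvPolynomial (Fin s) F) →
      P ∈ I := by
    intro P hP
    obtain ⟨c, hc, q, hq, hq'⟩ := h1 _ hP
    have : q = C c * P := hinj (by rw [hq', map_mul, map_C])
    rw [this] at hq
    exact (hI.mem_or_mem hq).resolve_left fun h => hc (hcap c h)
  refine ⟨?_, h2⟩
  refine ⟨?_, ?_⟩
  · intro h
    have : (1 : MvPolynomial (Fin s) R) ∈ I := h2 1 (by rw [h]; trivial)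
    exact hI.ne_top ((Ideal.eq_top_iff_one _).2 this)
  · intro x y hxy
    obtain ⟨c, hc, x', hx'⟩ := aux_fraction (R := R) x
    obtain ⟨e, he, y', hy'⟩ := aux_fraction (R := R) y
    have h3 : x' * y' ∈ I := by
      apply h2
      rw [map_mul, hx', hy']
      have : C (algebraMap R F c) * x * (C (algebraMap R F e) * y) =
        (C (algebraMap R F c) * C (algebraMap R F e)) * (x * y) := by ring
      rw [this]
      exact Ideal.mul_mem_left _ _ hxy
    have h4 : ∀ (c : R) (x : MvPolynomial (Fin s) F) (x' : MvPolynomial (Fin s) R), c ≠ 0 →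
        map (algebraMap R F) x' = C (algebraMap R F c) * x → x' ∈ I →
        x ∈ I.map (map (algebraMap R F) : MvPolynomial (Fin s) R →+* MvPolynomial (Fin s) F) := by
      intro c x x' hc hx hxI
      have h5 := Ideal.mul_mem_left _ (C (algebraMap R F c)⁻¹)
        (Ideal.mem_map_of_mem (map (algebraMap R F)) hxI)
      have hc' : algebraMap R F c ≠ 0 := fun h => hc (IsFractionRing.injective R F (by simpa using h))
      rwa [hx, ← mul_assoc, ← C_mul, inv_mul_cancel₀ hc', C_1, one_mul] at h5
    rcases hI.mem_or_mem h3 with h | h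
    · exact Or.inl (h4 c x x' hc hx' h)
    · exact Or.inr (h4 e y y' he hy' h)

theorem aux_all (R F L : Type) [CommRing R] [IsDomain R] [UniqueFactorizationMonoid R]
    [Field F] [Field L] [Algebra R F] [IsFractionRing R F] [Algebra F L] {s : ℕ}
    (I : Ideal (MvPolynomial (Fin s) R)) [hI : I.IsPrime] (hcap : ∀ c : R, C c ∈ I → c = 0)
    (y : Fin s → L)
    (hy : ∀ q : MvPolynomial (Fin s) F, aeval y q = 0 ↔ q ∈ I.map (map (algebraMap R F)))
    (hgen : ∀ l : L, ∃ p q : MvPolynomial (Fin s) F, l = aeval y p / aeval y q)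
    (hred : IsReduced (TensorProduct F (AlgebraicClosure F) L)) :
    ∃ (d : ℕ) (f : MvPolynomial (Fin (d + 1)) R) (g : R), g ≠ 0 ∧
      Irreducible (map (algebraMap R F) f) ∧
      ringKrullDim (MvPolynomial (Fin s) F ⧸
        I.map (map (algebraMap R F) : MvPolynomial (Fin s) R →+* MvPolynomial (Fin s) F)) = d ∧
      ∀ (K : Type) [Field K] (ev : R →+* K), Function.Surjective ev → ev g ≠ 0 →
        Irreducible (map ev f) →
        (I.map (map ev : MvPolynomial (Fin s) R →+* MvPolynomial (Fin s) K)).IsPrime ∧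
        ringKrullDim (MvPolynomial (Fin s) K ⧸
          I.map (map ev : MvPolynomial (Fin s) R →+* MvPolynomial (Fin s) K)) = d := by
  let _ : Algebra R L := ((algebraMap F L).comp (algebraMap R F)).toAlgebra
  have tow : IsScalarTower R F L := IsScalarTower.of_algebraMap_eq fun _ => rfl
  have hess : Algebra.EssFiniteType F L := by
    rw [← IntermediateField.fg_top_iff]
    classical
    refine ⟨Finset.univ.image y, ?_⟩
    rw [eq_top_iff]
    intro l _
    simp only [Finset.coe_image, Finset.coe_univ, Set.image_univ]
    exact (IntermediateField.mem_adjoin_range_iff F y l).2 (hgen l)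
  have hker : ∀ P : MvPolynomial (Fin s) R, aeval y P = 0 ↔ P ∈ I := by
    intro P
    rw [← aeval_map_algebraMap F, hy]
    exact ⟨(aux_mapfrac I hcap).2 P, fun h => Ideal.mem_map_of_mem _ h⟩
  have hgenR : ∀ l : L, ∃ v u : MvPolynomial (Fin s) R, aeval y v ≠ 0 ∧
      aeval y v * l = aeval y u := by
    intro l
    obtain ⟨p, q, hl⟩ := hgen l
    by_cases hq : aeval y q = 0
    · refine ⟨1, 0, by simp, ?_⟩
      rw [hl, hq]; simp
    obtain ⟨c, hc, p', hp'⟩ := aux_fraction (R := R) p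
    obtain ⟨e, he, q', hq'⟩ := aux_fraction (R := R) q
    have hne : ∀ c : R, c ≠ 0 → algebraMap F L (algebraMap R F c) ≠ 0 := by
      intro c hc h
      exact hc (IsFractionRing.injective R F ((algebraMap F L).injective (by simpa using h)))
    have h1 := congrArg (aeval y) hp'
    have h2 := congrArg (aeval y) hq'
    simp only [aeval_map_algebraMap, map_mul, aeval_C] at h1 h2
    refine ⟨C c * q', C e * p', ?_, ?_⟩
    · rw [map_mul, aeval_C, IsScalarTower.algebraMap_apply R F L, h2]
      exact mul_ne_zero (hne c hc) (mul_ne_zero (hne e he) hq)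
    · rw [map_mul, map_mul, aeval_C, aeval_C, h1, h2, IsScalarTower.algebraMap_apply R F L,
        IsScalarTower.algebraMap_apply R F L, hl]
      field_simp
  obtain ⟨d, z, f, b, a, htr, hmon, hirr, hf, hb, hbz, hab⟩ := aux_data R F L hred y
  obtain ⟨v, hv, huv⟩ := aux_common (aeval y : MvPolynomial (Fin s) R →ₐ[R] L).toRingHom
    ((nonZeroDivisors L).comap (aeval y : MvPolynomial (Fin s) R →ₐ[R] L)) z (fun i => by
      obtain ⟨v, u, hv, h⟩ := hgenR (z i)
      exact ⟨v, mem_nonZeroDivisors_of_ne_zero hv, u, h⟩)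
  choose u hu using huv
  have hv0 : aeval y v ≠ 0 := nonZeroDivisors.ne_zero hv
  obtain ⟨g, hg, H⟩ := aux_spec R L I y hker z f hf (rename Fin.succ b) hbz a hab v hv0 u hu
  obtain ⟨m, hm⟩ := MvPolynomial.ne_zero_iff.1 hb
  refine ⟨d, f, g * coeff m b, mul_ne_zero hg hm, hirr, ?_, ?_⟩
  · exact (aux_dim F L _ y hy y hgen 1 X (by simp) (by simp) d htr).2
  · intro K _ ev hev hgt hirrt
    rw [map_mul] at hgt
    have hmont : (finSuccEquiv K d (map ev f)).Monic := by
      rw [aux_finSucc_map]; exact hmon.map _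
    obtain ⟨M, _, _, ζ, h1, h2, h3, h4⟩ := aux_hyper K (map ev f) hirrt hmont
    have hbt : map ev b ≠ 0 := by
      intro h
      apply right_ne_zero_of_mul hgt
      rw [← coeff_map, h, coeff_zero]
    obtain ⟨η, e1, v', u', e2, e3⟩ := H K ev hev (left_ne_zero_of_mul hgt) M ζ h1 (by
      rw [map_rename]; exact h2 _ hbt)
    exact aux_dim K M _ η e1 ζ h3 v' u' e2 e3 d h4

theorem aux_all_frac2 {R F : Type} [CommRing R] [IsDomain R] [UniqueFactorizationMonoid R]
    [Field F] [Algebra R F] [IsFractionRing R F] {s : ℕ}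
    (I : Ideal (MvPolynomial (Fin s) R)) [hI : I.IsPrime] (hcap : ∀ c : R, C c ∈ I → c = 0)
    {L : Type} [Field L] (ψ : F →+* L)
    [Algebra (MvPolynomial (Fin s) F ⧸
        I.map (map (algebraMap R F) : MvPolynomial (Fin s) R →+* MvPolynomial (Fin s) F)) L]
    [IsFractionRing (MvPolynomial (Fin s) F ⧸
        I.map (map (algebraMap R F) : MvPolynomial (Fin s) R →+* MvPolynomial (Fin s) F)) L]
    (hψ : ψ = (algebraMap (MvPolynomial (Fin s) F ⧸
        I.map (map (algebraMap R F) : MvPolynomial (Fin s) R →+* MvPolynomial (Fin s) F)) L).comp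
        (algebraMap F _))
    (hsep : IsSepExtOfHom F L ψ) :
    ∃ (d : ℕ) (f : MvPolynomial (Fin (d + 1)) R) (g : R), g ≠ 0 ∧
      Irreducible (map (algebraMap R F) f) ∧
      ringKrullDim (MvPolynomial (Fin s) F ⧸
        I.map (map (algebraMap R F) : MvPolynomial (Fin s) R →+* MvPolynomial (Fin s) F)) = d ∧
      ∀ (K : Type) [Field K] (ev : R →+* K), Function.Surjective ev → ev g ≠ 0 →
        Irreducible (map ev f) →
        (I.map (map ev : MvPolynomial (Fin s) R →+* MvPolynomial (Fin s) K)).IsPrime ∧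
        ringKrullDim (MvPolynomial (Fin s) K ⧸
          I.map (map ev : MvPolynomial (Fin s) R →+* MvPolynomial (Fin s) K)) = d := by
  have hJp := (aux_mapfrac (F := F) I hcap).1
  let J := I.map (map (algebraMap R F) : MvPolynomial (Fin s) R →+* MvPolynomial (Fin s) F)
  let _ : Algebra F L := ψ.toAlgebra
  let y : Fin s → L := fun j => algebraMap (MvPolynomial (Fin s) F ⧸ J) L (Ideal.Quotient.mk J (X j))
  have hyq : ∀ q : MvPolynomial (Fin s) F,
      aeval y q = algebraMap (MvPolynomial (Fin s) F ⧸ J) L (Ideal.Quotient.mk J q) := by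
    intro q
    have : (aeval y : MvPolynomial (Fin s) F →ₐ[F] L).toRingHom =
        (algebraMap (MvPolynomial (Fin s) F ⧸ J) L).comp (Ideal.Quotient.mk J) := by
      apply MvPolynomial.ringHom_ext
      · intro c
        have h : algebraMap F L c = ψ c := rfl
        simp only [AlgHom.toRingHom_eq_coe, RingHom.coe_coe, aeval_C, h, hψ]
        rfl
      · intro i; simp [y]
    exact DFunLike.congr_fun this q
  refine aux_all R F L I hcap y ?_ ?_ hsep
  · intro q
    rw [hyq, ← Ideal.Quotient.eq_zero_iff_mem]
    constructor
    · intro h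
      exact IsFractionRing.injective _ L (by rw [map_zero]; exact h)
    · intro h
      change Ideal.Quotient.mk J q = 0 at h
      rw [h, map_zero]
  · intro l
    obtain ⟨p, q, hq, rfl⟩ := IsFractionRing.div_surjective (MvPolynomial (Fin s) F ⧸ J) l
    obtain ⟨p, rfl⟩ := Ideal.Quotient.mk_surjective p
    obtain ⟨q, rfl⟩ := Ideal.Quotient.mk_surjective q
    exact ⟨p, q, by rw [hyq, hyq]⟩

theorem aux_all_frac {R F : Type} [CommRing R] [IsDomain R] [UniqueFactorizationMonoid R]
    [Field F] [Algebra R F] [IsFractionRing R F] {s : ℕ}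
    (I : Ideal (MvPolynomial (Fin s) R)) [hI : I.IsPrime] (hcap : ∀ c : R, C c ∈ I → c = 0)
    (hsep : IsSepOverBase F (MvPolynomial (Fin s) F ⧸
        I.map (map (algebraMap R F) : MvPolynomial (Fin s) R →+* MvPolynomial (Fin s) F))) :
    ∃ (d : ℕ) (f : MvPolynomial (Fin (d + 1)) R) (g : R), g ≠ 0 ∧
      Irreducible (map (algebraMap R F) f) ∧
      ringKrullDim (MvPolynomial (Fin s) F ⧸
        I.map (map (algebraMap R F) : MvPolynomial (Fin s) R →+* MvPolynomial (Fin s) F)) = d ∧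
      ∀ (K : Type) [Field K] (ev : R →+* K), Function.Surjective ev → ev g ≠ 0 →
        Irreducible (map ev f) →
        (I.map (map ev : MvPolynomial (Fin s) R →+* MvPolynomial (Fin s) K)).IsPrime ∧
        ringKrullDim (MvPolynomial (Fin s) K ⧸
          I.map (map ev : MvPolynomial (Fin s) R →+* MvPolynomial (Fin s) K)) = d := by
  have hJp := (aux_mapfrac (F := F) I hcap).1
  let J := I.map (map (algebraMap R F) : MvPolynomial (Fin s) R →+* MvPolynomial (Fin s) F)
  let A := MvPolynomial (Fin s) F ⧸ J
  let ψ : F →+* FractionRing A := (algebraMap A (FractionRing A)).comp (algebraMap F A)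
  exact aux_all_frac2 I hcap ψ rfl hsep

theorem aux_spec_unique (K : Type) [Field K] {ι : Type} {n : ℕ} (t : ι → K)
    (f : MvPolynomial (Fin n) (MvPolynomial ι K)) (q : MvPolynomial (Fin n) K)
    (h : PolySpecializesTo K t (map (algebraMap _ (RatFuncField K ι)) f) q) :
    q = map (eval t) f := by
  ext m
  obtain ⟨a, b, hb, h1, h2⟩ := h m
  rw [coeff_map, ← map_mul] at h1
  have h3 := IsFractionRing.injective _ _ h1
  rw [coeff_map]
  rw [← h3, map_mul] at h2
  exact mul_left_cancel₀ hb h2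

theorem aux_spec_ne (K : Type) [Field K] {ι : Type} {n : ℕ} (t : ι → K)
    (g : MvPolynomial ι K) (hg : g ≠ 0) (q : MvPolynomial (Fin (n + 1)) K)
    (h : PolySpecializesTo K t
      (X 0 - C (algebraMap _ (RatFuncField K ι) g)⁻¹ :
        MvPolynomial (Fin (n + 1)) (RatFuncField K ι)) q) :
    eval t g ≠ 0 := by
  obtain ⟨a, b, hb, h1, h2⟩ := h 0
  have hg' : algebraMap _ (RatFuncField K ι) g ≠ 0 := fun h =>
    hg (IsFractionRing.injective _ (RatFuncField K ι) (by rw [h, map_zero]))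
  have hc : coeff 0 (X 0 - C (algebraMap _ (RatFuncField K ι) g)⁻¹ :
        MvPolynomial (Fin (n + 1)) (RatFuncField K ι)) = -(algebraMap _ (RatFuncField K ι) g)⁻¹ := by
    simp [coeff_sub]
  rw [hc] at h1
  have h3 : -b = a * g := by
    apply IsFractionRing.injective _ (RatFuncField K ι)
    rw [map_mul, ← h1, map_neg]
    field_simp
  intro h
  have h4 := congrArg (eval t) h3
  rw [map_mul, h, mul_zero, map_neg, neg_eq_zero] at h4
  exact hb h4

theorem aux_irr_lin {F : Type} [Field F] {n : ℕ} (a : F) :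
    Irreducible (X 0 - C a : MvPolynomial (Fin (n + 1)) F) := by
  rw [← MulEquiv.irreducible_iff (finSuccEquiv F n)]
  have : finSuccEquiv F n (X 0 - C a) = Polynomial.X - Polynomial.C (C a) := by
    rw [map_sub, finSuccEquiv_X_zero]
    congr 1
    simp [finSuccEquiv_apply]
  rw [this]
  exact (Polynomial.prime_X_sub_C _).irreducible

/-- If `p_T = ⟨P_1,…,P_l⟩ ⊆ K[T,Y]` is prime, `p_T ∩ K[T] = 0`, and
`Frac(K[T,Y]/p_T) = Frac(K(T)[Y]/p̃_T)` is a separable extension of `K(T)`, with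
`d = dim K(T)[Y]/p̃_T`, then there is a Hilbert subset `H ⊆ K^r` such that for all `t ∈ H`
the specialized ideal `p_t ⊆ K[Y]` is prime and `K[Y]/p_t` is an integral domain of Krull
dimension `d`. -/
theorem stmt_1 (K : Type) [Field K] (r s l : ℕ)
    (P : Fin l → MvPolynomial (Fin r ⊕ Fin s) K)
    (hprime : (Ideal.span (Set.range P)).IsPrime)
    (hcap : ∀ g : MvPolynomial (Fin r) K,
      MvPolynomial.rename Sum.inl g ∈ Ideal.span (Set.range P) → g = 0)
    (hsep : IsSepOverBase (RatFuncField K (Fin r))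
      (MvPolynomial (Fin s) (RatFuncField K (Fin r)) ⧸
        Ideal.span (Set.range fun i => extHom K r s (P i))))
    (d : WithBot ℕ∞)
    (hd : ringKrullDim (MvPolynomial (Fin s) (RatFuncField K (Fin r)) ⧸
        Ideal.span (Set.range fun i => extHom K r s (P i))) = d) :
    ∃ H : Set (Fin r → K), IsHilbertSubset K (Fin r) H ∧ ∀ t ∈ H,
      (Ideal.span (Set.range fun i => specHom K t (P i))).IsPrime ∧
      IsDomain (MvPolynomial (Fin s) K ⧸
        Ideal.span (Set.range fun i => specHom K t (P i))) ∧
      ringKrullDim (MvPolynomial (Fin s) K ⧸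
        Ideal.span (Set.range fun i => specHom K t (P i))) = d := by
  classical
  let R := MvPolynomial (Fin r) K
  let F := RatFuncField K (Fin r)
  let e : MvPolynomial (Fin r ⊕ Fin s) K ≃ₐ[K] MvPolynomial (Fin s) (MvPolynomial (Fin r) K) :=
    (renameEquiv K (Equiv.sumComm (Fin r) (Fin s))).trans (sumAlgEquiv K (Fin s) (Fin r))
  have eC : ∀ c, e (C c) = C (C c) := by intro c; simp [e]
  have eL : ∀ i, e (X (Sum.inl i)) = C (X i) := by
    intro i; simp [e]
  have eR : ∀ j, e (X (Sum.inr j)) = X j := by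
    intro j; simp [e]
  have hext : (map (algebraMap R F)).comp (e : MvPolynomial (Fin r ⊕ Fin s) K →+*
      MvPolynomial (Fin s) (MvPolynomial (Fin r) K)) = extHom K r s := by
    apply MvPolynomial.ringHom_ext
    · intro c; simp [extHom, eC, R, F]
    · rintro (i | j) <;> simp [extHom, eL, eR, R, F]
  have hspec : ∀ t : Fin r → K, (map (eval t)).comp (e : MvPolynomial (Fin r ⊕ Fin s) K →+*
      MvPolynomial (Fin s) (MvPolynomial (Fin r) K)) = specHom K t := by
    intro t
    apply MvPolynomial.ringHom_ext
    · intro c; simp [specHom, eC]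
    · rintro (i | j) <;> simp [specHom, eL, eR]
  let I : Ideal (MvPolynomial (Fin s) (MvPolynomial (Fin r) K)) :=
    (Ideal.span (Set.range P)).map (e : MvPolynomial (Fin r ⊕ Fin s) K →+*
      MvPolynomial (Fin s) (MvPolynomial (Fin r) K))
  have hI : I.IsPrime := Ideal.map_isPrime_of_equiv e
  have hspan : ∀ (T : Type) [CommRing T] (φ : MvPolynomial (Fin s) (MvPolynomial (Fin r) K) →+* T)
      (ψ : MvPolynomial (Fin r ⊕ Fin s) K →+* T),
      φ.comp (e : MvPolynomial (Fin r ⊕ Fin s) K →+*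
      MvPolynomial (Fin s) (MvPolynomial (Fin r) K)) = ψ →
      I.map φ = Ideal.span (Set.range fun i => ψ (P i)) := by
    intro T _ φ ψ h
    rw [Ideal.map_map, h, Ideal.map_span, ← Set.range_comp]
    rfl
  have hcapI : ∀ c : MvPolynomial (Fin r) K, C c ∈ I → c = 0 := by
    intro c hc
    apply hcap
    have h1 : e (rename Sum.inl c) = C c := by
      have : (e : MvPolynomial (Fin r ⊕ Fin s) K →+*
          MvPolynomial (Fin s) (MvPolynomial (Fin r) K)).comp
          (rename Sum.inl : MvPolynomial (Fin r) K →ₐ[K] _).toRingHom = C := by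
        apply MvPolynomial.ringHom_ext
        · intro c; simp [eC]
        · intro i; simp [eL]
      exact DFunLike.congr_fun this c
    rw [← h1] at hc
    obtain ⟨x, hx, hx2⟩ := (Ideal.mem_map_of_equiv e _).1 hc
    rwa [e.injective hx2] at hx
  have hJ := hspan _ (map (algebraMap R F)) (extHom K r s) hext
  have hJp := (aux_mapfrac (F := F) I hcapI).1
  rw [← hJ] at hsep hd
  obtain ⟨n, f, g, hg, hirr, hdim, H⟩ : ∃ (d : ℕ) (f : MvPolynomial (Fin (d + 1)) R) (g : R), g ≠ 0 ∧
      Irreducible (map (algebraMap R F) f) ∧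
      ringKrullDim (MvPolynomial (Fin s) F ⧸
        I.map (map (algebraMap R F) : MvPolynomial (Fin s) R →+* MvPolynomial (Fin s) F)) = d ∧
      ∀ (K : Type) [Field K] (ev : R →+* K), Function.Surjective ev → ev g ≠ 0 →
        Irreducible (map ev f) →
        (I.map (map ev : MvPolynomial (Fin s) R →+* MvPolynomial (Fin s) K)).IsPrime ∧
        ringKrullDim (MvPolynomial (Fin s) K ⧸
          I.map (map ev : MvPolynomial (Fin s) R →+* MvPolynomial (Fin s) K)) = d :=
    aux_all_frac I hcapI hsep
  rw [hd] at hdim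
  refine ⟨_, ⟨n + 1, 2, 1, ![map (algebraMap R F) f, X 0 - C (algebraMap R F g)⁻¹], ![1],
    ?_, ⟨0, 0, by simp⟩, rfl⟩, ?_⟩
  · intro i
    fin_cases i
    · exact hirr
    · exact aux_irr_lin _
  · rintro t ⟨_, ht⟩
    obtain ⟨q0, hq0, hq0'⟩ := ht 0
    obtain ⟨q1, hq1, _⟩ := ht 1
    have h1 := aux_spec_unique K t f q0 hq0
    have h2 := aux_spec_ne K t g hg q1 hq1
    rw [h1] at hq0'
    obtain ⟨h3, h4⟩ := H K (eval t) (fun c => ⟨C c, eval_C c⟩) h2 hq0'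
    rw [hspan _ _ _ (hspec t)] at h3 h4
    exact ⟨h3, Ideal.Quotient.isDomain _, by rw [h4, hdim]⟩
end
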